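/- For every integer radius r ≥ 1, let H(r) = 8r² / ( Σ_{n=0}^{2r−1} a_n ), where a_n = x_n + y_n is the Manhattan distance to the origin of the n-th point of the signum circle path of radius r (this is the harmonic mean of the values π_n = 4r/a_n). Then H(r) converges to 16/(π + 2) as r → ∞. -/

import Mathlib

open Filter Finset Real

/-- The signum function of the paper: `-1` if `t ≤ 0` and `1` if `t > 0`. -/
noncomputable def sgn (t : ℝ) : ℝ := if t ≤ 0 then -1 else 1

/-- The signum term `sₙ` determining the step of the path, computed from the
current position `(x, y)`, with `a = x + y` and `c = r - n - 1`. -/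
noncomputable def sStep (r n : ℕ) (x y : ℝ) : ℝ :=
  -sgn ((x + y) + (r : ℝ) / Real.sqrt 2 *
    (Real.sqrt (((x + y) - 1) ^ 2 + ((r : ℝ) - n - 1) ^ 2) -
     Real.sqrt (((x + y) + 1) ^ 2 + ((r : ℝ) - n - 1) ^ 2)))

/-- The signum circle path of radius `r`: `x₀ = r`, `y₀ = 0`,
`xₙ₊₁ = xₙ + sₙ/2 - 1/2`, `yₙ₊₁ = yₙ + sₙ/2 + 1/2`. -/
noncomputable def circlePath (r : ℕ) : ℕ → ℝ × ℝ
  | 0 => ((r : ℝ), 0)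
  | n + 1 =>
    let p := circlePath r n
    let s := sStep r n p.1 p.2
    (p.1 + s / 2 - 1 / 2, p.2 + s / 2 + 1 / 2)

/-- The signum term `sₙ` along the signum circle path of radius `r`. -/
noncomputable def sTerm (r n : ℕ) : ℝ := sStep r n (circlePath r n).1 (circlePath r n).2

lemma ell_setup (a c R : ℝ) (ha : 0 < a) :
    ∃ S : ℝ, 0 < S ∧ 4 * (a ^ 2 + c ^ 2) ≤ S ^ 2 ∧ S ^ 2 ≤ 4 * (a ^ 2 + c ^ 2 + 1) ∧
      (a + R / √2 * (√((a - 1) ^ 2 + c ^ 2) - √((a + 1) ^ 2 + c ^ 2))) * (√2 * S) =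
        a * (√2 * S - 4 * R) := by
  obtain ⟨p, hp⟩ : ∃ p, p = √((a - 1) ^ 2 + c ^ 2) := ⟨_, rfl⟩
  obtain ⟨q, hq⟩ : ∃ q, q = √((a + 1) ^ 2 + c ^ 2) := ⟨_, rfl⟩
  rw [← hp, ← hq]
  have hp0 : 0 ≤ p := hp ▸ Real.sqrt_nonneg _
  have hq0 : 0 < q := hq ▸ Real.sqrt_pos.2 (by positivity)
  have hp2 : p ^ 2 = (a - 1) ^ 2 + c ^ 2 := by rw [hp, Real.sq_sqrt (by positivity)]
  have hq2 : q ^ 2 = (a + 1) ^ 2 + c ^ 2 := by rw [hq, Real.sq_sqrt (by positivity)]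
  have ht0 : 0 < √(2 : ℝ) := Real.sqrt_pos.2 (by norm_num)
  refine ⟨p + q, by positivity, ?_, ?_, ?_⟩
  · have h4 : a ^ 2 + c ^ 2 - 1 ≤ p * q := by
      refine (abs_le_of_sq_le_sq' ?_ (by positivity)).2
      rw [mul_pow, hp2, hq2]
      nlinarith [sq_nonneg c]
    nlinarith
  · nlinarith [sq_nonneg (p - q)]
  · field_simp
    linear_combination R * hp2 - R * hq2

lemma ell_le (a c R : ℝ) (ha : 0 < a)
    (h : a + R / √2 * (√((a - 1) ^ 2 + c ^ 2) - √((a + 1) ^ 2 + c ^ 2)) ≤ 0) :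
    a ^ 2 + c ^ 2 ≤ 2 * R ^ 2 := by
  obtain ⟨S, hS, h1, h2, h3⟩ := ell_setup a c R ha
  have ht0 : 0 < √(2 : ℝ) := Real.sqrt_pos.2 (by norm_num)
  have ht2 : √(2 : ℝ) ^ 2 = 2 := Real.sq_sqrt (by norm_num)
  have h4 := mul_nonpos_of_nonpos_of_nonneg h (by positivity : 0 ≤ √2 * S)
  rw [h3] at h4
  have h5 : √2 * S ≤ 4 * R := by
    by_contra hc
    push Not at hc
    have := mul_pos ha (sub_pos.2 hc)
    linarith
  have h6 : (√2 * S) ^ 2 ≤ (4 * R) ^ 2 := by gcongr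
  rw [mul_pow, ht2] at h6
  nlinarith

lemma ell_gt (a c R : ℝ) (ha : 0 < a) (hR : 0 < R)
    (h : 0 < a + R / √2 * (√((a - 1) ^ 2 + c ^ 2) - √((a + 1) ^ 2 + c ^ 2))) :
    2 * R ^ 2 - 1 < a ^ 2 + c ^ 2 := by
  obtain ⟨S, hS, h1, h2, h3⟩ := ell_setup a c R ha
  have ht0 : 0 < √(2 : ℝ) := Real.sqrt_pos.2 (by norm_num)
  have ht2 : √(2 : ℝ) ^ 2 = 2 := Real.sq_sqrt (by norm_num)
  have h4 := mul_pos h (by positivity : 0 < √2 * S)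
  rw [h3] at h4
  have h5 : 4 * R < √2 * S := by
    have := pos_of_mul_pos_right h4 ha.le
    linarith
  have h6 : (4 * R) ^ 2 < (√2 * S) ^ 2 := by gcongr
  rw [mul_pow √2, ht2] at h6
  nlinarith

/-- Manhattan distance along the path. -/
noncomputable def aSeq (r n : ℕ) : ℝ := (circlePath r n).1 + (circlePath r n).2

lemma aSeq_zero (r : ℕ) : aSeq r 0 = r := by simp [aSeq, circlePath]

lemma aSeq_succ (r n : ℕ) (hr : 0 < (r : ℝ)) (ha : 0 < aSeq r n) :
    (aSeq r (n + 1) = aSeq r n + 1 ∧ aSeq r n ^ 2 + ((r : ℝ) - n - 1) ^ 2 ≤ 2 * (r : ℝ) ^ 2) ∨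
    (aSeq r (n + 1) = aSeq r n - 1 ∧
      2 * (r : ℝ) ^ 2 - 1 < aSeq r n ^ 2 + ((r : ℝ) - n - 1) ^ 2) := by
  have e : aSeq r (n + 1) = aSeq r n + sStep r n (circlePath r n).1 (circlePath r n).2 := by
    simp only [aSeq, circlePath]
    ring
  rw [e]
  unfold sStep sgn
  change 0 < (circlePath r n).1 + (circlePath r n).2 at ha
  split_ifs with h
  · left
    exact ⟨by norm_num, ell_le _ _ _ ha h⟩
  · right
    exact ⟨by ring, ell_gt _ _ _ ha hr (not_le.1 h)⟩

lemma step_inv (a b c R m : ℝ) (hR : 2 ≤ R) (hm : 0 ≤ m) (hmR : m + 1 ≤ 2 * R)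
    (hc1 : c ≤ R - 1) (hc2 : -R ≤ c) (h1 : 0 < a) (h2 : 1 ≤ a - c) (h3 : -3 ≤ a + c)
    (h4 : a ^ 2 + c ^ 2 - 2 * R ^ 2 ≤ 12 * R + 2 * m)
    (h5 : -(20 * R) ≤ a ^ 2 + c ^ 2 - 2 * R ^ 2)
    (hs : (b = a + 1 ∧ a ^ 2 + c ^ 2 ≤ 2 * R ^ 2) ∨
      (b = a - 1 ∧ 2 * R ^ 2 - 1 < a ^ 2 + c ^ 2)) :
    0 < b ∧ 1 ≤ b - (c - 1) ∧ -3 ≤ b + (c - 1) ∧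
    b ^ 2 + (c - 1) ^ 2 - 2 * R ^ 2 ≤ 12 * R + 2 * (m + 1) ∧
    -(20 * R) ≤ b ^ 2 + (c - 1) ^ 2 - 2 * R ^ 2 := by
  have hcc : c ^ 2 ≤ R ^ 2 := by nlinarith
  have ha4 : a ≤ 5 * R := by nlinarith [sq_nonneg c]
  rcases hs with ⟨hb, hD⟩ | ⟨hb, hD⟩ <;> subst hb
  · have ha2 : a ≤ 2 * R := by nlinarith [sq_nonneg c]
    have e : (a + 1) ^ 2 + (c - 1) ^ 2 = a ^ 2 + c ^ 2 + 2 * (a - c) + 2 := by ring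
    rw [e]
    refine ⟨by linarith, by linarith, by linarith, by linarith, by linarith⟩
  · have ha2 : R - 1 < a := by nlinarith
    have e : (a - 1) ^ 2 + (c - 1) ^ 2 = a ^ 2 + c ^ 2 - 2 * (a + c) + 2 := by ring
    rw [e]
    refine ⟨by linarith, by linarith, by linarith, ?_, by linarith⟩
    by_cases h0 : a ^ 2 + c ^ 2 - 2 * R ^ 2 ≤ 0
    · linarith
    · have : R < a := by nlinarith
      linarith

lemma inv (r : ℕ) (hr : 2 ≤ r) (n : ℕ) (hn : n ≤ 2 * r) :
    0 < aSeq r n ∧ 1 ≤ aSeq r n - ((r : ℝ) - n - 1) ∧ -3 ≤ aSeq r n + ((r : ℝ) - n - 1) ∧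
    aSeq r n ^ 2 + ((r : ℝ) - n - 1) ^ 2 - 2 * (r : ℝ) ^ 2 ≤ 12 * r + 2 * n ∧
    -(20 * r) ≤ aSeq r n ^ 2 + ((r : ℝ) - n - 1) ^ 2 - 2 * (r : ℝ) ^ 2 := by
  have hR : (2 : ℝ) ≤ r := by exact_mod_cast hr
  induction n with
  | zero =>
    rw [aSeq_zero]
    push_cast
    refine ⟨by linarith, by linarith, by linarith, by nlinarith, by nlinarith⟩
  | succ n ih =>
    obtain ⟨h1, h2, h3, h4, h5⟩ := ih (by omega)
    have hnR : (n : ℝ) + 1 ≤ 2 * r := by exact_mod_cast hn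
    have hn0 : (0 : ℝ) ≤ n := Nat.cast_nonneg n
    have hs := aSeq_succ r n (by linarith) h1
    generalize aSeq r (n + 1) = b at *
    generalize aSeq r n = a at *
    have hc' : (r : ℝ) - (n + 1 : ℕ) - 1 = ((r : ℝ) - n - 1) - 1 := by push_cast; ring
    rw [hc']
    push_cast
    refine step_inv _ _ _ _ _ hR hn0 hnR ?_ ?_ h1 h2 h3 h4 h5 hs <;> linarith

lemma aSeq_close (r : ℕ) (hr : 2 ≤ r) (n : ℕ) (hn : n < 2 * r) :
    |aSeq r n - r * √(2 - (((r : ℝ) - n - 1) / r) ^ 2)| ≤ 20 := by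
  have hR : (2 : ℝ) ≤ r := by exact_mod_cast hr
  obtain ⟨h1, h2, h3, h4, h5⟩ := inv r hr n hn.le
  have hnR : (n : ℝ) + 1 ≤ 2 * r := by exact_mod_cast hn
  have hn0 : (0 : ℝ) ≤ n := Nat.cast_nonneg n
  obtain ⟨c, hc⟩ : ∃ c : ℝ, c = (r : ℝ) - n - 1 := ⟨_, rfl⟩
  rw [← hc] at h2 h3 h4 h5 ⊢
  have hc1 : c ≤ r - 1 := by linarith
  have hc2 : -r ≤ c := by linarith
  generalize aSeq r n = a at *
  have hcc : c ^ 2 ≤ (r : ℝ) ^ 2 := by nlinarith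
  have hx : (c / r) ^ 2 ≤ 1 := by
    rw [div_pow, div_le_one (by positivity)]; exact hcc
  have hA1 : 1 ≤ √(2 - (c / r) ^ 2) := Real.one_le_sqrt.2 (by linarith)
  have hA : (r * √(2 - (c / r) ^ 2)) ^ 2 = 2 * (r : ℝ) ^ 2 - c ^ 2 := by
    rw [mul_pow, Real.sq_sqrt (by linarith)]
    field_simp
  have hA2 : (r : ℝ) ≤ r * √(2 - (c / r) ^ 2) := by nlinarith
  generalize r * √(2 - (c / r) ^ 2) = A at *
  rw [abs_le]
  constructor <;> nlinarith

/-- An antiderivative of `√(2 - u²)`. -/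
noncomputable def Phi (u : ℝ) : ℝ := u * √(2 - u ^ 2) / 2 + Real.arcsin (u / √2)

lemma Phi_deriv (u : ℝ) (hu : u ^ 2 ≤ 1) : HasDerivAt Phi (√(2 - u ^ 2)) u := by
  have hp : 0 < 2 - u ^ 2 := by linarith
  have ht0 : 0 < √(2 : ℝ) := Real.sqrt_pos.2 (by norm_num)
  have ht2 : √(2 : ℝ) ^ 2 = 2 := Real.sq_sqrt (by norm_num)
  have hq : (u / √2) ^ 2 < 1 := by rw [div_pow, ht2]; linarith
  have hq' := abs_lt.1 ((sq_lt_one_iff_abs_lt_one _).1 hq)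
  have d1 : HasDerivAt (fun u : ℝ => 2 - u ^ 2) (-(2 * u)) u := by
    simpa using (hasDerivAt_pow 2 u).const_sub 2
  have d2 := d1.sqrt hp.ne'
  have d3 := ((hasDerivAt_id u).mul d2).div_const 2
  have d4 := (Real.hasDerivAt_arcsin hq'.1.ne' hq'.2.ne).comp u ((hasDerivAt_id u).div_const √2)
  have d5 := d3.add d4
  refine HasDerivAt.congr_deriv d5 ?_
  have e : √(1 - (u / √2) ^ 2) = √(2 - u ^ 2) / √2 := by
    rw [← Real.sqrt_div hp.le, div_pow, ht2]
    congr 1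
    ring
  simp only [id]
  rw [e]
  have hs : 0 < √(2 - u ^ 2) := Real.sqrt_pos.2 hp
  have hs2 : √(2 - u ^ 2) ^ 2 = 2 - u ^ 2 := Real.sq_sqrt hp.le
  generalize √(2 - u ^ 2) = s at *
  field_simp
  linear_combination -hs2

lemma Phi_diff : Phi 1 - Phi (-1) = 1 + Real.pi / 2 := by
  have h : Real.arcsin (1 / √2) = Real.pi / 4 := by
    rw [Real.arcsin_eq_iff_eq_sin ⟨by linarith [Real.pi_pos], by linarith [Real.pi_pos]⟩,
      Real.sin_pi_div_four]
    have ht2 : √(2 : ℝ) * √2 = 2 := Real.mul_self_sqrt (by norm_num)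
    field_simp
    linarith
  unfold Phi
  rw [neg_div, Real.arcsin_neg, h]
  norm_num
  ring

lemma lip (u v : ℝ) (hu : u ^ 2 ≤ 1) (hv : v ^ 2 ≤ 1) :
    |√(2 - u ^ 2) - √(2 - v ^ 2)| ≤ |u - v| := by
  have h1 : 1 ≤ √(2 - u ^ 2) := Real.one_le_sqrt.2 (by linarith)
  have h2 : 1 ≤ √(2 - v ^ 2) := Real.one_le_sqrt.2 (by linarith)
  have h3 : √(2 - u ^ 2) ^ 2 = 2 - u ^ 2 := Real.sq_sqrt (by linarith)
  have h4 : √(2 - v ^ 2) ^ 2 = 2 - v ^ 2 := Real.sq_sqrt (by linarith)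
  generalize √(2 - u ^ 2) = s at *
  generalize √(2 - v ^ 2) = t at *
  have e : |s - t| * (s + t) = |u - v| * |u + v| := by
    rw [← abs_of_pos (by linarith : 0 < s + t), ← abs_mul, ← abs_mul, ← abs_neg]
    congr 1
    linear_combination h4 - h3
  have hu' := abs_le.1 ((sq_le_one_iff_abs_le_one _).1 hu)
  have hv' := abs_le.1 ((sq_le_one_iff_abs_le_one _).1 hv)
  have h5 : |u + v| ≤ 2 := abs_le.2 ⟨by linarith [hu'.1, hv'.1], by linarith [hu'.2, hv'.2]⟩
  nlinarith [abs_nonneg (s - t), abs_nonneg (u - v)]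

lemma mvt (r : ℕ) (hr : 2 ≤ r) (n : ℕ) (hn : n < 2 * r) :
    |√(2 - (((n : ℝ) - r) / r) ^ 2) - r * (Phi (((n : ℝ) + 1 - r) / r) - Phi (((n : ℝ) - r) / r))|
      ≤ 1 / r := by
  have hR : (2 : ℝ) ≤ r := by exact_mod_cast hr
  have hnR : (n : ℝ) + 1 ≤ 2 * r := by exact_mod_cast hn
  have hn0 : (0 : ℝ) ≤ n := Nat.cast_nonneg n
  obtain ⟨u, hu⟩ : ∃ u : ℝ, u = ((n : ℝ) - r) / r := ⟨_, rfl⟩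
  obtain ⟨v, hv⟩ : ∃ v : ℝ, v = ((n : ℝ) + 1 - r) / r := ⟨_, rfl⟩
  rw [← hu, ← hv]
  have huv : v - u = 1 / r := by rw [hu, hv]; field_simp; ring
  have hrp : 0 < 1 / (r : ℝ) := by positivity
  have hu1 : -1 ≤ u := by rw [hu, le_div_iff₀ (by linarith)]; linarith
  have hv1 : v ≤ 1 := by rw [hv, div_le_iff₀ (by linarith)]; linarith
  have hsq : ∀ x ∈ Set.Icc u v, x ^ 2 ≤ 1 := fun x hx => by nlinarith [hx.1, hx.2]
  obtain ⟨ξ, hξ, h⟩ := exists_hasDerivAt_eq_slope Phi (fun x => √(2 - x ^ 2))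
    (by linarith : u < v)
    (fun x hx => (Phi_deriv x (hsq x hx)).continuousAt.continuousWithinAt)
    (fun x hx => Phi_deriv x (hsq x (Set.Ioo_subset_Icc_self hx)))
  have e : r * (Phi v - Phi u) = √(2 - ξ ^ 2) := by
    rw [h, huv]; field_simp
  rw [e]
  refine (lip u ξ (hsq u ⟨le_rfl, by linarith⟩) (hsq ξ (Set.Ioo_subset_Icc_self hξ))).trans ?_
  rw [abs_le]
  constructor <;> linarith [hξ.1, hξ.2]

lemma riemann (r : ℕ) (hr : 2 ≤ r) :
    |(∑ n ∈ Finset.range (2 * r), √(2 - (((n : ℝ) - r) / r) ^ 2)) - r * (1 + Real.pi / 2)| ≤ 2 := by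
  have hR : (2 : ℝ) ≤ r := by exact_mod_cast hr
  have tel := Finset.sum_range_sub (fun n : ℕ => Phi (((n : ℝ) - r) / r)) (2 * r)
  have e1 : (((2 * r : ℕ) : ℝ) - r) / r = 1 := by push_cast; field_simp; ring
  have e2 : (((0 : ℕ) : ℝ) - r) / r = -1 := by push_cast; field_simp; ring
  simp only [e1, e2, Phi_diff] at tel
  rw [← tel, Finset.mul_sum, ← Finset.sum_sub_distrib]
  refine (Finset.abs_sum_le_sum_abs _ _).trans ?_
  refine (Finset.sum_le_sum (fun n hn => ?_)).trans (b := ∑ n ∈ Finset.range (2 * r), 1 / (r : ℝ)) ?_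
  · have := mvt r hr n (Finset.mem_range.1 hn)
    push_cast
    exact this
  · simp
    field_simp
    norm_num

lemma sum_close (r : ℕ) (hr : 2 ≤ r) :
    |(∑ n ∈ Finset.range (2 * r), aSeq r n) - (r : ℝ) ^ 2 * (1 + Real.pi / 2)| ≤ 42 * (r : ℝ) := by
  have hR : (2 : ℝ) ≤ r := by exact_mod_cast hr
  have h1 := riemann r hr
  have h2 : |(∑ n ∈ Finset.range (2 * r), aSeq r n) -
      r * ∑ n ∈ Finset.range (2 * r), √(2 - (((r : ℝ) - n - 1) / r) ^ 2)| ≤ 40 * (r : ℝ) := by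
    rw [Finset.mul_sum, ← Finset.sum_sub_distrib]
    refine (Finset.abs_sum_le_sum_abs _ _).trans ?_
    refine (Finset.sum_le_sum (fun n hn => aSeq_close r hr n (Finset.mem_range.1 hn))).trans ?_
    simp
    linarith
  have h3 : ∑ n ∈ Finset.range (2 * r), √(2 - (((r : ℝ) - n - 1) / r) ^ 2) =
      ∑ n ∈ Finset.range (2 * r), √(2 - (((n : ℝ) - r) / r) ^ 2) := by
    rw [← Finset.sum_range_reflect]
    refine Finset.sum_congr rfl (fun n hn => ?_)
    have hn' := Finset.mem_range.1 hn
    have : ((2 * r - 1 - n : ℕ) : ℝ) = 2 * r - 1 - n := by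
      rw [Nat.sub_sub, Nat.cast_sub (by omega)]; push_cast; ring
    rw [this]
    congr 4
    ring
  rw [h3] at h2
  generalize ∑ n ∈ Finset.range (2 * r), √(2 - (((n : ℝ) - r) / r) ^ 2) = T at *
  generalize ∑ n ∈ Finset.range (2 * r), aSeq r n = S at *
  rw [abs_le] at *
  obtain ⟨h1, h1'⟩ := h1
  obtain ⟨h2, h2'⟩ := h2
  constructor <;> nlinarith

/-- the harmonic mean `H(r) = 8r² / ∑_{n=0}^{2r-1} aₙ` of the
values `πₙ = 4r/aₙ` along the signum circle path of radius `r`, where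
`aₙ = xₙ + yₙ`, converges to `16/(π + 2)` as `r → ∞`. -/
theorem harmonicMean_pi_tendsto :
    Filter.Tendsto (fun r : ℕ =>
      8 * (r : ℝ) ^ 2 / ∑ n ∈ Finset.range (2 * r),
        ((circlePath r n).1 + (circlePath r n).2))
      Filter.atTop (nhds (16 / (Real.pi + 2))) := by
  have key : Tendsto (fun r : ℕ => (∑ n ∈ Finset.range (2 * r), aSeq r n) / (r : ℝ) ^ 2) atTop
      (nhds (1 + Real.pi / 2)) := by
    rw [tendsto_iff_dist_tendsto_zero]
    have h0 : Tendsto (fun r : ℕ => (42 : ℝ) / r) atTop (nhds 0) :=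
      tendsto_const_div_atTop_nhds_zero_nat 42
    refine squeeze_zero' (Eventually.of_forall fun _ => dist_nonneg) ?_ h0
    filter_upwards [eventually_ge_atTop 2] with r hr
    have hR : (2 : ℝ) ≤ r := by exact_mod_cast hr
    have h := sum_close r hr
    rw [Real.dist_eq]
    have e : (∑ n ∈ Finset.range (2 * r), aSeq r n) / (r : ℝ) ^ 2 - (1 + Real.pi / 2) =
        ((∑ n ∈ Finset.range (2 * r), aSeq r n) - (r : ℝ) ^ 2 * (1 + Real.pi / 2)) / (r : ℝ) ^ 2 := by
      field_simp
    rw [e, abs_div, abs_of_pos (by positivity : 0 < (r : ℝ) ^ 2),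
      div_le_div_iff₀ (by positivity) (by positivity)]
    nlinarith
  have hne : 1 + Real.pi / 2 ≠ 0 := by positivity
  have key2 := (tendsto_const_nhds (x := (8 : ℝ))).div key hne
  have e : 16 / (Real.pi + 2) = 8 / (1 + Real.pi / 2) := by
    have := Real.pi_pos
    field_simp
    ring
  rw [e]
  refine key2.congr (fun r => ?_)
  simp only [Pi.div_apply]
  rw [div_div_eq_mul_div]
  rfl
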